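/- If a tuple (R, R_0, Δ, Π) is achievable with respect to the strong perceptual constraint by a sequence of codes for which the reconstruction Y^n = g_n(f_n(X^n,Z^n,K),Z^n,K) and the side information Z^n form jointly i.i.d. sequences (i.e., the pairs (Y_i,Z_i), i = 1,…,n, are i.i.d.), then (R, R_0, Δ, Π) lies in the closure of R^{(s)} := ∪_{γ>0}(R_γ^{(s)-} ∪ R_γ^{(s)+}). -/

import Mathlib

open scoped BigOperators
open Finset Filter

noncomputable section

/-- A probability mass function on a finite type. -/
def IsPMF {α : Type*} [Fintype α] (p : α → ℝ) : Prop :=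
  (∀ x, 0 ≤ p x) ∧ ∑ x, p x = 1

/-- Total variation distance `sup_A |P(A) - Q(A)|` between two distributions on a finite type. -/
noncomputable def dTV {α : Type*} [Fintype α] (p q : α → ℝ) : ℝ :=
  ⨆ A : Finset α, |∑ x ∈ A, p x - ∑ x ∈ A, q x|

/-- The i.i.d. (product) distribution on `n`-sequences. -/
noncomputable def prodDist {α : Type*} [Fintype α] (n : ℕ) (p : α → ℝ) :
    (Fin n → α) → ℝ :=
  fun xs => ∏ i, p (xs i)

/-- Empirical distribution (type) of a sequence. -/
noncomputable def emp {α : Type*} [Fintype α] [DecidableEq α] {n : ℕ}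
    (xs : Fin n → α) : α → ℝ :=
  fun x => (1 / (n : ℝ)) * ∑ i, if xs i = x then (1 : ℝ) else 0

/-- Law (pushforward distribution) of a random variable on a finite probability space
with pmf `μ`. -/
noncomputable def law {Ω α : Type*} [Fintype Ω] [DecidableEq α]
    (μ : Ω → ℝ) (f : Ω → α) : α → ℝ :=
  fun a => ∑ ω, if f ω = a then μ ω else 0

/-- Shannon entropy (in nats). -/
noncomputable def entropy {α : Type*} [Fintype α] (p : α → ℝ) : ℝ :=
  -∑ x, p x * Real.log (p x)

/-- Shannon conditional mutual information `I(X;Y|Z)` of a joint pmf on `X × Y × Z`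
(the third coordinate is the conditioning variable). -/
noncomputable def condMI {X Y Z : Type*} [Fintype X] [Fintype Y] [Fintype Z]
    (p : X × Y × Z → ℝ) : ℝ :=
  ∑ x : X, ∑ y : Y, ∑ z : Z,
    p (x, y, z) *
      Real.log
        (p (x, y, z) * (∑ x' : X, ∑ y' : Y, p (x', y', z)) /
          ((∑ y' : Y, p (x, y', z)) * (∑ x' : X, p (x', y, z))))



section RDP

variable {X Z : Type*} [Fintype X] [Fintype Z]

/-- `(X,Z)`-marginal of a joint pmf on `X × Y × Z`. -/
noncomputable def margXZ3 {Y : Type*} [Fintype Y] (q : X × Y × Z → ℝ) : X × Z → ℝ :=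
  fun p => ∑ y, q (p.1, y, p.2)

/-- `X`-marginal of a joint pmf on `X × Y × Z`. -/
noncomputable def margX3 {Y : Type*} [Fintype Y] (q : X × Y × Z → ℝ) : X → ℝ :=
  fun x => ∑ y, ∑ z, q (x, y, z)

/-- `Y`-marginal of a joint pmf on `X × Y × Z`. -/
noncomputable def margY3 {Y : Type*} [Fintype Y] (q : X × Y × Z → ℝ) : Y → ℝ :=
  fun y => ∑ x, ∑ z, q (x, y, z)

/-- Expected per-letter distortion `E[D(X,Y)]` under a joint pmf on `X × Y × Z`. -/
noncomputable def expD3 (q : X × X × Z → ℝ) (D : X → X → ℝ) : ℝ :=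
  ∑ x, ∑ y, ∑ z, q (x, y, z) * D x y

/-- `limsup_{n→∞} d_TV(∏_{i=1}^n P, ∏_{i=1}^n Q)`. -/
noncomputable def limsupTV {α : Type*} [Fintype α] (p q : α → ℝ) : ℝ :=
  Filter.limsup (fun n => dTV (prodDist n p) (prodDist n q)) Filter.atTop

/-- The conditional rate-distortion function
`R(Δ) = inf { I(X;Y|Z) : P_{Y|XZ}, E[D(X,Y)] ≤ Δ }`. -/
noncomputable def Rdist (pXZ : X × Z → ℝ) (D : X → X → ℝ) (Δ : ℝ) : ℝ :=
  sInf {r | ∃ q : X × X × Z → ℝ,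
    IsPMF q ∧ margXZ3 q = pXZ ∧ expD3 q D ≤ Δ ∧ r = condMI q}

/-- `g(R,Δ)`. -/
noncomputable def gFun (pXZ : X × Z → ℝ) (D : X → X → ℝ) (R Δ : ℝ) : ℝ :=
  sInf {v | ∃ q : X × X × Z → ℝ,
    IsPMF q ∧ margXZ3 q = pXZ ∧ condMI q ≤ R ∧ expD3 q D ≤ Δ ∧
      v = limsupTV (margX3 q) (margY3 q)}

/-- `f(Δ) = g(R(Δ),Δ)`. -/
noncomputable def fFun (pXZ : X × Z → ℝ) (D : X → X → ℝ) (Δ : ℝ) : ℝ :=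
  gFun pXZ D (Rdist pXZ D Δ) Δ

/-- The region `R_γ^{(e)}` (tuples `(R, R₀, Δ, Π)`). -/
def RegionE (pXZ : X × Z → ℝ) (D : X → X → ℝ) (γ : ℝ) : Set (ℝ × ℝ × ℝ × ℝ) :=
  {t | ∃ q : X × X × Z → ℝ, IsPMF q ∧ margXZ3 q = pXZ ∧
    0 ≤ t.2.1 ∧ condMI q + γ ≤ t.1 ∧ expD3 q D ≤ t.2.2.1 ∧
    dTV (margX3 q) (margY3 q) ≤ t.2.2.2}

/-- The region `R_γ^{(s)+}` (tuples `(R, R₀, Δ, Π)`). -/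
def RegionSplus (pXZ : X × Z → ℝ) (D : X → X → ℝ) (γ : ℝ) : Set (ℝ × ℝ × ℝ × ℝ) :=
  {t | ∃ q : X × X × Z → ℝ, IsPMF q ∧ margXZ3 q = pXZ ∧
    fFun pXZ D t.2.2.1 ≤ t.2.2.2 ∧ 0 ≤ t.2.1 ∧
    condMI q + γ ≤ t.1 ∧ expD3 q D ≤ t.2.2.1}

/-- Witness conditions for membership in `R_γ^{(s)-}` with auxiliary alphabet `U` and
joint pmf `q` on `X × Y × U × Z` (with `Y = X` the reconstruction alphabet). -/
def SminusWitness (pXZ : X × Z → ℝ) (D : X → X → ℝ) (γ : ℝ)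
    (R R0 Δ Pc : ℝ) (U : Type*) [Fintype U] (q : X × X × U × Z → ℝ) : Prop :=
  IsPMF q ∧
  (∀ x z, (∑ y, ∑ u, q (x, y, u, z)) = pXZ (x, z)) ∧
  -- conditional independence X ⟂ Y | (U,Z)
  (∀ x y u z, (∑ x', ∑ y', q (x', y', u, z)) * q (x, y, u, z) =
      (∑ y', q (x, y', u, z)) * (∑ x', q (x', y, u, z))) ∧
  Pc < fFun pXZ D Δ ∧ 0 < R0 ∧
  -- R ≥ I(X;U|Z) + γ
  condMI (fun p : X × U × Z => ∑ y, q (p.1, y, p.2.1, p.2.2)) + γ ≤ R ∧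
  -- R + R₀ ≥ I(Y;U|Z) + γ
  condMI (fun p : X × U × Z => ∑ x, q (x, p.1, p.2.1, p.2.2)) + γ ≤ R + R0 ∧
  (∑ x, ∑ y, ∑ u, ∑ z, q (x, y, u, z) * D x y) ≤ Δ ∧
  limsupTV (fun x => ∑ y, ∑ u, ∑ z, q (x, y, u, z))
    (fun y => ∑ x, ∑ u, ∑ z, q (x, y, u, z)) ≤ Pc

/-- The region `R_γ^{(s)-}` (tuples `(R, R₀, Δ, Π)`). -/
def RegionSminus (pXZ : X × Z → ℝ) (D : X → X → ℝ) (γ : ℝ) : Set (ℝ × ℝ × ℝ × ℝ) :=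
  {t | ∃ (U : Type) (inst : Fintype U) (q : X × X × U × Z → ℝ),
    @SminusWitness X Z _ _ pXZ D γ t.1 t.2.1 t.2.2.1 t.2.2.2 U inst q}

end RDP

section Codes

variable {X Z : Type*} [Fintype X] [Fintype Z]

/-- Joint distribution of `(X^n, Z^n, K, M, Y^n)` induced by an i.i.d. source `pXZ`,
common randomness `K` uniform on `Fin N0`, a stochastic encoder `enc` and a
stochastic decoder `dec`. -/
noncomputable def codeJoint {n N N0 : ℕ} (pXZ : X × Z → ℝ)
    (enc : (Fin n → X) → (Fin n → Z) → Fin N0 → Fin N → ℝ)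
    (dec : Fin N → (Fin n → Z) → Fin N0 → (Fin n → X) → ℝ) :
    (Fin n → X) × (Fin n → Z) × Fin N0 × Fin N × (Fin n → X) → ℝ :=
  fun w =>
    (∏ i, pXZ (w.1 i, w.2.1 i)) * (1 / (N0 : ℝ)) *
      enc w.1 w.2.1 w.2.2.1 w.2.2.2.1 * dec w.2.2.2.1 w.2.1 w.2.2.1 w.2.2.2.2

/-- Distribution of the reconstruction `Y^n` induced by a code. -/
noncomputable def codeOutY {n N N0 : ℕ} (pXZ : X × Z → ℝ)
    (enc : (Fin n → X) → (Fin n → Z) → Fin N0 → Fin N → ℝ)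
    (dec : Fin N → (Fin n → Z) → Fin N0 → (Fin n → X) → ℝ) :
    (Fin n → X) → ℝ :=
  fun ys => ∑ xs : Fin n → X, ∑ zs : Fin n → Z, ∑ k : Fin N0, ∑ m : Fin N,
    codeJoint pXZ enc dec (xs, zs, k, m, ys)

/-- Joint distribution of `(Y^n, Z^n)` induced by a code. -/
noncomputable def codeYZ {n N N0 : ℕ} (pXZ : X × Z → ℝ)
    (enc : (Fin n → X) → (Fin n → Z) → Fin N0 → Fin N → ℝ)
    (dec : Fin N → (Fin n → Z) → Fin N0 → (Fin n → X) → ℝ) :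
    (Fin n → X) × (Fin n → Z) → ℝ :=
  fun p => ∑ xs : Fin n → X, ∑ k : Fin N0, ∑ m : Fin N,
    codeJoint pXZ enc dec (xs, p.2, k, m, p.1)

/-- Expected average distortion `E[D(X^n,Y^n)]` of a code. -/
noncomputable def codeExpDist {n N N0 : ℕ} (pXZ : X × Z → ℝ)
    (enc : (Fin n → X) → (Fin n → Z) → Fin N0 → Fin N → ℝ)
    (dec : Fin N → (Fin n → Z) → Fin N0 → (Fin n → X) → ℝ)
    (D : X → X → ℝ) : ℝ :=
  ∑ w : (Fin n → X) × (Fin n → Z) × Fin N0 × Fin N × (Fin n → X),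
    codeJoint pXZ enc dec w * ((1 / (n : ℝ)) * ∑ i, D (w.1 i) (w.2.2.2.2 i))

/-- Expected total variation between the empirical distributions of source and
reconstruction, `E[d_TV(P̂_{X^n}, P̂_{Y^n})]`. -/
noncomputable def codeExpEmpTV [DecidableEq X] {n N N0 : ℕ} (pXZ : X × Z → ℝ)
    (enc : (Fin n → X) → (Fin n → Z) → Fin N0 → Fin N → ℝ)
    (dec : Fin N → (Fin n → Z) → Fin N0 → (Fin n → X) → ℝ) : ℝ :=
  ∑ w : (Fin n → X) × (Fin n → Z) × Fin N0 × Fin N × (Fin n → X),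
    codeJoint pXZ enc dec w * dTV (emp w.1) (emp w.2.2.2.2)

/-- `(R, R₀, Δ, Π)` is achievable with respect to the strong perceptual constraint. -/
def AchievableStrong (pXZ : X × Z → ℝ) (D : X → X → ℝ) (R R0 Δ Pc : ℝ) : Prop :=
  ∀ ε > (0 : ℝ), ∃ n₀ : ℕ, ∀ n ≥ n₀,
    ∃ (enc : (Fin n → X) → (Fin n → Z) → Fin ⌊(2 : ℝ) ^ ((n : ℝ) * (R0 + ε))⌋₊ →
          Fin ⌊(2 : ℝ) ^ ((n : ℝ) * (R + ε))⌋₊ → ℝ)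
      (dec : Fin ⌊(2 : ℝ) ^ ((n : ℝ) * (R + ε))⌋₊ → (Fin n → Z) →
          Fin ⌊(2 : ℝ) ^ ((n : ℝ) * (R0 + ε))⌋₊ → (Fin n → X) → ℝ),
      (∀ xs zs k, IsPMF (enc xs zs k)) ∧ (∀ m zs k, IsPMF (dec m zs k)) ∧
      codeExpDist pXZ enc dec D ≤ Δ + ε ∧
      dTV (prodDist n (fun x => ∑ z, pXZ (x, z))) (codeOutY pXZ enc dec) ≤ Pc + ε

/-- `(R, R₀, Δ, Π)` is achievable with respect to the empirical perceptual constraint. -/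
def AchievableEmp [DecidableEq X] (pXZ : X × Z → ℝ) (D : X → X → ℝ)
    (R R0 Δ Pc : ℝ) : Prop :=
  ∀ ε > (0 : ℝ), ∃ n₀ : ℕ, ∀ n ≥ n₀,
    ∃ (enc : (Fin n → X) → (Fin n → Z) → Fin ⌊(2 : ℝ) ^ ((n : ℝ) * (R0 + ε))⌋₊ →
          Fin ⌊(2 : ℝ) ^ ((n : ℝ) * (R + ε))⌋₊ → ℝ)
      (dec : Fin ⌊(2 : ℝ) ^ ((n : ℝ) * (R + ε))⌋₊ → (Fin n → Z) →
          Fin ⌊(2 : ℝ) ^ ((n : ℝ) * (R0 + ε))⌋₊ → (Fin n → X) → ℝ),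
      (∀ xs zs k, IsPMF (enc xs zs k)) ∧ (∀ m zs k, IsPMF (dec m zs k)) ∧
      codeExpDist pXZ enc dec D ≤ Δ + ε ∧
      codeExpEmpTV pXZ enc dec ≤ Pc + ε

/-- `(R, R₀, Δ, Π)` is achievable with respect to the strong perceptual constraint by
codes whose reconstruction `Y^n` together with the side information `Z^n` forms a
jointly i.i.d. sequence. -/
def AchievableStrongIID (pXZ : X × Z → ℝ) (D : X → X → ℝ) (R R0 Δ Pc : ℝ) : Prop :=
  ∀ ε > (0 : ℝ), ∃ n₀ : ℕ, ∀ n ≥ n₀,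
    ∃ (enc : (Fin n → X) → (Fin n → Z) → Fin ⌊(2 : ℝ) ^ ((n : ℝ) * (R0 + ε))⌋₊ →
          Fin ⌊(2 : ℝ) ^ ((n : ℝ) * (R + ε))⌋₊ → ℝ)
      (dec : Fin ⌊(2 : ℝ) ^ ((n : ℝ) * (R + ε))⌋₊ → (Fin n → Z) →
          Fin ⌊(2 : ℝ) ^ ((n : ℝ) * (R0 + ε))⌋₊ → (Fin n → X) → ℝ),
      (∀ xs zs k, IsPMF (enc xs zs k)) ∧ (∀ m zs k, IsPMF (dec m zs k)) ∧
      codeExpDist pXZ enc dec D ≤ Δ + ε ∧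
      dTV (prodDist n (fun x => ∑ z, pXZ (x, z))) (codeOutY pXZ enc dec) ≤ Pc + ε ∧
      (∃ r : X × Z → ℝ, IsPMF r ∧
        ∀ ys zs, codeYZ pXZ enc dec (ys, zs) = ∏ i, r (ys i, zs i))

end Codes

lemma gibbs_term {p v : ℝ} (hp : 0 < p) (hv : 0 < v) : p * Real.log v ≤ p * (v - 1) :=
  mul_le_mul_of_nonneg_left (Real.log_le_sub_one_of_pos hv) hp.le

lemma mul_div_le_self' {a x : ℝ} (hx : 0 ≤ x) : a * x / a ≤ x := by
  by_cases h : a = 0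
  · simp [h, hx]
  · rw [mul_div_cancel_left₀ _ h]

lemma condMI_symm {A B C : Type*} [Fintype A] [Fintype B] [Fintype C] (p : A × B × C → ℝ) :
    condMI (fun w : B × A × C => p (w.2.1, w.1, w.2.2)) = condMI p := by
  unfold condMI
  rw [Finset.sum_comm]
  refine Finset.sum_congr rfl fun a _ => Finset.sum_congr rfl fun b _ =>
    Finset.sum_congr rfl fun c _ => ?_
  simp only
  rw [Finset.sum_comm, mul_comm (∑ y', p (a, y', c))]

lemma condMI_le_log {A W Z : Type*} [Fintype A] [Fintype W] [Fintype Z] [Nonempty W]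
    (p : A × W × Z → ℝ) (hp : ∀ w, 0 ≤ p w) (hs : ∑ a, ∑ w, ∑ z, p (a, w, z) = 1)
    (C : ℝ) (hC : 0 < C) (hle : ∀ a w z, p (a, w, z) ≤ C * ∑ w', p (a, w', z)) :
    condMI p ≤ Real.log (C * Fintype.card W) := by
  have hcard : (0 : ℝ) < Fintype.card W := by exact_mod_cast Fintype.card_pos
  set L := Real.log (C * Fintype.card W)
  have key : ∀ a w z, p (a, w, z) * Real.log
        (p (a, w, z) * (∑ x', ∑ y', p (x', y', z)) /
          ((∑ y', p (a, y', z)) * (∑ x', p (x', w, z)))) ≤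
      p (a, w, z) * L + (p (a, w, z) * ((∑ x', ∑ y', p (x', y', z)) / Fintype.card W)
        / (∑ x', p (x', w, z)) - p (a, w, z)) := by
    intro a w z
    rcases (hp (a, w, z)).eq_or_lt with h0 | h0
    · simp [← h0]
    have h1 : 0 < ∑ x', p (x', w, z) :=
      h0.trans_le (Finset.single_le_sum (f := fun x' => p (x', w, z)) (fun i _ => hp _) (Finset.mem_univ a))
    have h2 : 0 < ∑ y', p (a, y', z) :=
      h0.trans_le (Finset.single_le_sum (f := fun y' => p (a, y', z)) (fun i _ => hp _) (Finset.mem_univ w))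
    have h3 : 0 < ∑ x', ∑ y', p (x', y', z) :=
      h2.trans_le (Finset.single_le_sum (f := fun x' => ∑ y', p (x', y', z))
        (fun i _ => Finset.sum_nonneg fun j _ => hp _) (Finset.mem_univ a))
    set s1 := ∑ x', p (x', w, z)
    set s2 := ∑ y', p (a, y', z) with hs2
    set s3 := ∑ x', ∑ y', p (x', y', z)
    have e1 : Real.log (p (a, w, z) * s3 / (s2 * s1)) ≤ L + Real.log (s3 / Fintype.card W / s1) := by
      rw [← Real.log_mul (by positivity) (by positivity)]
      apply Real.log_le_log (by positivity)
      have := hle a w z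
      rw [← hs2] at this
      have e : C * (Fintype.card W : ℝ) * (s3 / (Fintype.card W : ℝ) / s1) = (C * s2) * s3 / (s2 * s1) := by
        field_simp
      rw [e]; gcongr
    have e2 := gibbs_term h0 (v := s3 / Fintype.card W / s1) (by positivity)
    have e3 := mul_le_mul_of_nonneg_left e1 h0.le
    have e4 : p (a, w, z) * (s3 / Fintype.card W) / s1 = p (a, w, z) * (s3 / Fintype.card W / s1) := by
      ring
    rw [e4]; linarith
  have h1 : condMI p ≤ _ := Finset.sum_le_sum fun a _ => Finset.sum_le_sum fun w _ =>
    Finset.sum_le_sum fun z _ => key a w z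
  refine h1.trans ?_
  simp only [Finset.sum_add_distrib, Finset.sum_sub_distrib, ← Finset.sum_mul, hs, one_mul]
  have h2 : ∑ a, ∑ w, ∑ z, p (a, w, z) * ((∑ x', ∑ y', p (x', y', z)) / Fintype.card W)
        / (∑ x', p (x', w, z)) ≤ 1 := by
    rw [Finset.sum_comm]
    calc _ = ∑ w, ∑ z, (∑ a, p (a, w, z)) * ((∑ x', ∑ y', p (x', y', z)) / Fintype.card W)
        / (∑ x', p (x', w, z)) := by
          refine Finset.sum_congr rfl fun w _ => ?_
          rw [Finset.sum_comm]
          refine Finset.sum_congr rfl fun z _ => ?_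
          rw [← Finset.sum_div, ← Finset.sum_mul]
      _ ≤ ∑ w : W, ∑ z, ((∑ x', ∑ y', p (x', y', z)) / Fintype.card W) :=
          Finset.sum_le_sum fun w _ => Finset.sum_le_sum fun z _ => mul_div_le_self'
            (div_nonneg (Finset.sum_nonneg fun _ _ => Finset.sum_nonneg fun _ _ => hp _) hcard.le)
      _ = 1 := by
          rw [Finset.sum_const, ← Finset.sum_div, Finset.card_univ, nsmul_eq_mul,
            mul_div_cancel₀ _ hcard.ne', ← hs, Finset.sum_comm]
          refine Finset.sum_congr rfl fun w _ => ?_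
          rw [Finset.sum_comm]
  linarith

lemma condMI_dpi {A B U Z : Type*} [Fintype A] [Fintype B] [Fintype U] [Fintype Z]
    (p : A × U × Z → ℝ) (hp : ∀ w, 0 ≤ p w) (V : A → B → ℝ) (hV : ∀ a b, 0 ≤ V a b)
    (hV1 : ∀ a, ∑ b, V a b = 1) :
    condMI (fun w : B × U × Z => ∑ a, p (a, w.2.1, w.2.2) * V a w.1) ≤ condMI p := by
  have hz : ∀ z, ∑ x' : B, ∑ y' : U, ∑ a, p (a, y', z) * V a x' = ∑ a, ∑ u, p (a, u, z) := by
    intro z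
    rw [Finset.sum_comm]
    rw [Finset.sum_comm (s := (Finset.univ : Finset A))]
    refine Finset.sum_congr rfl fun u _ => ?_
    rw [Finset.sum_comm]
    refine Finset.sum_congr rfl fun a _ => ?_
    rw [← Finset.mul_sum, hV1, mul_one]
  have hu : ∀ u z, ∑ x' : B, ∑ a, p (a, u, z) * V a x' = ∑ a, p (a, u, z) := by
    intro u z
    rw [Finset.sum_comm]
    refine Finset.sum_congr rfl fun a _ => ?_
    rw [← Finset.mul_sum, hV1, mul_one]
  have hb : ∀ b z, ∑ u, ∑ a, p (a, u, z) * V a b = ∑ a, (∑ u, p (a, u, z)) * V a b := by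
    intro b z
    rw [Finset.sum_comm]
    refine Finset.sum_congr rfl fun a _ => ?_
    rw [Finset.sum_mul]
  have key : ∀ b u z, (∑ a, p (a, u, z) * V a b) * Real.log ((∑ a, p (a, u, z) * V a b) *
        (∑ a, ∑ u, p (a, u, z)) / ((∑ a, (∑ u, p (a, u, z)) * V a b) * ∑ a, p (a, u, z))) ≤
      ∑ a, V a b * (p (a, u, z) * Real.log (p (a, u, z) * (∑ a, ∑ u, p (a, u, z)) /
        ((∑ u, p (a, u, z)) * ∑ a, p (a, u, z)))) := by
    intro b u z
    set q := ∑ a, p (a, u, z) * V a b with hq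
    set s3 := ∑ a, ∑ u, p (a, u, z)
    set s1 := ∑ a, p (a, u, z)
    set t := ∑ a, (∑ u, p (a, u, z)) * V a b with ht
    have hq0 : 0 ≤ q := Finset.sum_nonneg fun a _ => mul_nonneg (hp _) (hV _ _)
    have term : ∀ a, p (a, u, z) * V a b * Real.log (q * s3 / (t * s1)) ≤
        V a b * (p (a, u, z) * Real.log (p (a, u, z) * s3 / ((∑ u, p (a, u, z)) * s1))) +
        (((∑ u, p (a, u, z)) * V a b) * q / t - p (a, u, z) * V a b) := by
      intro a
      have hnn : 0 ≤ ((∑ u, p (a, u, z)) * V a b) * q / t := by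
        refine div_nonneg (mul_nonneg (mul_nonneg (Finset.sum_nonneg fun _ _ => hp _) (hV _ _)) hq0) ?_
        exact Finset.sum_nonneg fun a _ => mul_nonneg (Finset.sum_nonneg fun _ _ => hp _) (hV _ _)
      rcases (hp (a, u, z)).eq_or_lt with h0 | h0
      · rw [← h0]; simpa using hnn
      rcases (hV a b).eq_or_lt with h0' | h0'
      · rw [← h0']; simp
      have hs1 : 0 < s1 :=
        h0.trans_le (Finset.single_le_sum (f := fun x' => p (x', u, z)) (fun i _ => hp _) (Finset.mem_univ a))
      have h2 : 0 < ∑ y', p (a, y', z) :=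
        h0.trans_le (Finset.single_le_sum (f := fun y' => p (a, y', z)) (fun i _ => hp _) (Finset.mem_univ u))
      have h3 : 0 < s3 :=
        h2.trans_le (Finset.single_le_sum (f := fun x' => ∑ y', p (x', y', z))
          (fun i _ => Finset.sum_nonneg fun j _ => hp _) (Finset.mem_univ a))
      have hq1 : 0 < q := (mul_pos h0 h0').trans_le
        (Finset.single_le_sum (f := fun a => p (a, u, z) * V a b)
          (fun i _ => mul_nonneg (hp _) (hV _ _)) (Finset.mem_univ a))
      have ht1 : 0 < t := (mul_pos h2 h0').trans_le
        (Finset.single_le_sum (f := fun a => (∑ u, p (a, u, z)) * V a b)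
          (fun i _ => mul_nonneg (Finset.sum_nonneg fun _ _ => hp _) (hV _ _)) (Finset.mem_univ a))
      set s2 := ∑ y', p (a, y', z)
      have g := gibbs_term (mul_pos h0 h0') (v := q * s2 / (t * p (a, u, z))) (by positivity)
      have e1 : Real.log (q * s3 / (t * s1)) = Real.log (p (a, u, z) * s3 / (s2 * s1)) +
          Real.log (q * s2 / (t * p (a, u, z))) := by
        rw [← Real.log_mul (by positivity) (by positivity)]
        congr 1; field_simp
      have e2 : p (a, u, z) * V a b * (q * s2 / (t * p (a, u, z)) - 1) =
          s2 * V a b * q / t - p (a, u, z) * V a b := by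
        field_simp
      rw [e1]
      rw [e2] at g
      linarith
    have hsum := Finset.sum_le_sum fun a (_ : a ∈ Finset.univ) => term a
    rw [← Finset.sum_mul, Finset.sum_add_distrib, Finset.sum_sub_distrib, ← hq, ← Finset.sum_div,
      ← Finset.sum_mul, ← ht] at hsum
    have := mul_div_le_self' (a := t) hq0
    linarith
  calc condMI (fun w : B × U × Z => ∑ a, p (a, w.2.1, w.2.2) * V a w.1) 
      ≤ ∑ b, ∑ u, ∑ z, ∑ a, V a b * (p (a, u, z) * Real.log (p (a, u, z) * (∑ a, ∑ u, p (a, u, z)) /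
        ((∑ u, p (a, u, z)) * ∑ a, p (a, u, z)))) := by
        unfold condMI
        refine Finset.sum_le_sum fun b _ => Finset.sum_le_sum fun u _ =>
          Finset.sum_le_sum fun z _ => ?_
        simp only [hz]
        simp only [hu, hb]
        exact key b u z
    _ = condMI p := by
        unfold condMI
        rw [Finset.sum_comm, Finset.sum_comm (s := (Finset.univ : Finset A))]
        refine Finset.sum_congr rfl fun u _ => ?_
        rw [Finset.sum_comm, Finset.sum_comm (s := (Finset.univ : Finset A))]
        refine Finset.sum_congr rfl fun z _ => ?_
        rw [Finset.sum_comm]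
        refine Finset.sum_congr rfl fun a _ => ?_
        rw [← Finset.sum_mul, hV1, one_mul]

lemma sum_prod_pair {n : ℕ} {A Z : Type*} [Fintype A] [Fintype Z] (g : Fin n → A → Z → ℝ) :
    ∑ as : Fin n → A, ∑ zs : Fin n → Z, ∏ j, g j (as j) (zs j) = ∏ j, ∑ a, ∑ z, g j a z := by
  classical
  have h1 : ∀ as : Fin n → A, ∑ zs : Fin n → Z, ∏ j, g j (as j) (zs j) = ∏ j, ∑ z, g j (as j) z := by
    intro as
    rw [Finset.prod_univ_sum, Fintype.piFinset_univ]
  simp only [h1]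
  rw [Finset.prod_univ_sum, Fintype.piFinset_univ]

open Classical in
lemma marg_pair {n : ℕ} {A Z : Type*} [Fintype A] [Fintype Z] (r : A × Z → ℝ) (hr : IsPMF r)
    (i : Fin n) (a : A) (z : Z) :
    ∑ as : Fin n → A, ∑ zs : Fin n → Z, (if as i = a then if zs i = z then
      ∏ j, r (as j, zs j) else 0 else 0) = r (a, z) := by
  have h := sum_prod_pair (n := n) (fun j a' z' => r (a', z') *
    (if j = i then (if a' = a then if z' = z then (1:ℝ) else 0 else 0) else 1))
  have h1 : ∀ (as : Fin n → A) (zs : Fin n → Z), (∏ j, (r (as j, zs j) *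
    (if j = i then (if as j = a then if zs j = z then (1:ℝ) else 0 else 0) else 1))) =
     (if as i = a then if zs i = z then ∏ j, r (as j, zs j) else 0 else 0) := by
    intro as zs
    rw [Finset.prod_mul_distrib, Finset.prod_ite_eq' Finset.univ i]
    simp
  simp only [h1] at h
  rw [h]
  have hr1 : ∑ a', ∑ z', r (a', z') = 1 := by rw [← hr.2, Fintype.sum_prod_type]
  rw [Finset.prod_eq_single i]
  · simp
  · intro j _ hj
    simp [hj, hr1]
  · simp

open Classical in
/-- Single-letterization (time sharing) of an `n`-letter law. -/
noncomputable def single {n : ℕ} {A W Z : Type*} [Fintype A] 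
    (P : (Fin n → A) × W × (Fin n → Z) → ℝ) : A × (Fin n × W × (Fin n → Z)) × Z → ℝ :=
  fun q => if q.2.1.2.2 q.2.1.1 = q.2.2 then
    (1 / (n : ℝ)) * ∑ as : Fin n → A, if as q.2.1.1 = q.1 then P (as, q.2.1.2.1, q.2.1.2.2) else 0
    else 0

lemma single_sum {n : ℕ} {A W Z : Type*} [Fintype A] [Fintype W] [Fintype Z]
    (P : (Fin n → A) × W × (Fin n → Z) → ℝ) (F : A → (Fin n × W × (Fin n → Z)) → Z → ℝ) :
    ∑ a, ∑ u, ∑ z, single P (a, u, z) * F a u z =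
      (1 / (n : ℝ)) * ∑ as, ∑ w, ∑ zs, P (as, w, zs) * ∑ i, F (as i) (i, w, zs) (zs i) := by
  classical
  calc ∑ a, ∑ u, ∑ z, single P (a, u, z) * F a u z
      = ∑ a, ∑ u : Fin n × W × (Fin n → Z), (1 / (n : ℝ)) * ∑ as : Fin n → A, 
          if as u.1 = a then P (as, u.2.1, u.2.2) * F a u (u.2.2 u.1) else 0 := by
        refine Finset.sum_congr rfl fun a _ => Finset.sum_congr rfl fun u _ => ?_
        simp only [single, ite_mul, zero_mul, Finset.sum_ite_eq, Finset.mem_univ, if_true]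
        rw [mul_assoc, Finset.sum_mul]
        simp only [ite_mul, zero_mul]
    _ = ∑ u : Fin n × W × (Fin n → Z), (1 / (n : ℝ)) * ∑ as : Fin n → A, 
          P (as, u.2.1, u.2.2) * F (as u.1) u (u.2.2 u.1) := by
        rw [Finset.sum_comm]
        refine Finset.sum_congr rfl fun u _ => ?_
        rw [← Finset.mul_sum, Finset.sum_comm]
        simp
    _ = _ := by
        rw [← Finset.mul_sum]
        congr 1
        rw [Finset.sum_comm]
        refine Finset.sum_congr rfl fun as _ => ?_
        simp only [Fintype.sum_prod_type, Finset.mul_sum]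
        rw [Finset.sum_comm]
        refine Finset.sum_congr rfl fun w _ => ?_
        rw [Finset.sum_comm]

lemma single_margU {n : ℕ} (hn : 0 < n) {A W Z : Type*} [Fintype A] [Fintype W] [Fintype Z]
    (P : (Fin n → A) × W × (Fin n → Z) → ℝ) (r : A × Z → ℝ) (hr : IsPMF r)
    (hPr : ∀ as zs, ∑ w, P (as, w, zs) = ∏ i, r (as i, zs i)) (a : A) (z : Z) :
    ∑ u, single P (a, u, z) = r (a, z) := by
  classical
  have hn' : (n : ℝ) ≠ 0 := by positivity
  have h := single_sum P (fun a' _ z' => if a' = a then if z' = z then 1 else 0 else 0)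
  have e1 : ∑ a', ∑ u, ∑ z', single P (a', u, z') * (if a' = a then if z' = z then 1 else 0 else 0)
      = ∑ u, single P (a, u, z) := by
    rw [Finset.sum_comm]
    refine Finset.sum_congr rfl fun u _ => ?_
    simp
  rw [← e1, h]
  have e2 : ∀ as : Fin n → A, ∑ w, ∑ zs : Fin n → Z, P (as, w, zs) * ∑ i, (if as i = a then if zs i = z then (1:ℝ) else 0 else 0)
     = ∑ i, ∑ zs : Fin n → Z, (if as i = a then if zs i = z then ∏ j, r (as j, zs j) else 0 else 0) := by
    intro as
    rw [Finset.sum_comm, Finset.sum_comm (s := (Finset.univ : Finset (Fin n)))]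
    refine Finset.sum_congr rfl fun zs _ => ?_
    rw [← Finset.sum_mul, hPr, Finset.mul_sum]
    refine Finset.sum_congr rfl fun i _ => ?_
    split_ifs <;> simp
  simp only [e2]
  rw [Finset.sum_comm]
  simp only [marg_pair r hr]
  simp [hn']

lemma single_nonneg {n : ℕ} {A W Z : Type*} [Fintype A] 
    (P : (Fin n → A) × W × (Fin n → Z) → ℝ) (hP : ∀ w, 0 ≤ P w) (q) : 0 ≤ single P q := by
  classical
  unfold single
  split_ifs
  · refine mul_nonneg (by positivity) (Finset.sum_nonneg fun as _ => ?_)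
    split_ifs
    · exact hP _
    · exact le_rfl
  · exact le_rfl

open Classical in
lemma single_margA {n : ℕ} {A W Z : Type*} [Fintype A]
    (P : (Fin n → A) × W × (Fin n → Z) → ℝ) (i : Fin n) (w : W) (zs : Fin n → Z) (z : Z) :
    ∑ a, single P (a, (i, w, zs), z) = if zs i = z then (1 / (n : ℝ)) * ∑ as, P (as, w, zs) else 0 := by
  unfold single
  simp only
  split_ifs
  · rw [← Finset.mul_sum, Finset.sum_comm]
    simp
  · simp

lemma condMI_single {n : ℕ} (hn : 0 < n) {A W Z : Type*} [Fintype A] [Fintype W] [Fintype Z]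
    (P : (Fin n → A) × W × (Fin n → Z) → ℝ) (hP : ∀ w, 0 ≤ P w) (r : A × Z → ℝ) (hr : IsPMF r)
    (hPr : ∀ as zs, ∑ w, P (as, w, zs) = ∏ i, r (as i, zs i)) :
    condMI (single P) ≤ (1 / (n : ℝ)) * condMI P := by
  classical
  have hn' : (0 : ℝ) < n := by positivity
  have hzn : ∀ zs, ∑ as, ∑ w, P (as, w, zs) = ∏ i, ∑ a, r (a, zs i) := by
    intro zs
    simp only [hPr]
    rw [Finset.prod_univ_sum, Fintype.piFinset_univ]
  -- expand the single-letter side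
  have hL : condMI (single P) = (1 / (n : ℝ)) * ∑ as, ∑ w, ∑ zs, P (as, w, zs) * ∑ i,
      Real.log (single P (as i, (i, w, zs), zs i) * (∑ a, r (a, zs i)) /
        (r (as i, zs i) * ((1 / (n : ℝ)) * ∑ as, P (as, w, zs)))) := by
    have h := single_sum P (fun a u z => Real.log (single P (a, u, z) * (∑ a, r (a, z)) /
        (r (a, z) * ∑ a', single P (a', u, z))))
    unfold condMI
    simp only [single_margU hn P r hr hPr]
    rw [h]
    simp only [single_margA, if_true]
  rw [hL]
  refine mul_le_mul_of_nonneg_left ?_ (by positivity)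
  unfold condMI
  simp only [hzn]
  simp only [hPr]
  rw [Finset.sum_comm, Finset.sum_comm (s := (Finset.univ : Finset (Fin n → A)))]
  refine Finset.sum_le_sum fun w _ => ?_
  rw [Finset.sum_comm, Finset.sum_comm (s := (Finset.univ : Finset (Fin n → A)))]
  refine Finset.sum_le_sum fun zs _ => ?_
  set PW := ∑ as, P (as, w, zs) with hPW
  have hPW0 : 0 ≤ PW := Finset.sum_nonneg fun _ _ => hP _
  set Q : Fin n → A → ℝ := fun i a => ∑ as : Fin n → A, if as i = a then P (as, w, zs) else 0 with hQ
  have hsQ : ∀ i a, single P (a, (i, w, zs), zs i) = (1 / (n : ℝ)) * Q i a := by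
    intro i a; simp [single, hQ]
  have hQ0 : ∀ i a, 0 ≤ Q i a := fun i a => Finset.sum_nonneg fun as _ => by
    split_ifs
    · exact hP _
    · exact le_rfl
  have hQs : ∀ i, ∑ a, Q i a = PW := by
    intro i
    simp only [hQ]
    rw [Finset.sum_comm]
    simp [hPW]
  have term : ∀ as, P (as, w, zs) * ∑ i,
      Real.log (single P (as i, (i, w, zs), zs i) * (∑ a, r (a, zs i)) /
        (r (as i, zs i) * ((1 / (n : ℝ)) * PW))) ≤
      P (as, w, zs) * Real.log (P (as, w, zs) * (∏ i, ∑ a, r (a, zs i)) /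
        ((∏ i, r (as i, zs i)) * PW)) + (PW * (∏ i, Q i (as i) / PW) - P (as, w, zs)) := by
    intro as
    rcases (hP (as, w, zs)).eq_or_lt with h0 | h0
    · rw [← h0]
      simp only [zero_mul, sub_zero, zero_add]
      exact mul_nonneg hPW0 (Finset.prod_nonneg fun i _ => div_nonneg (hQ0 _ _) hPW0)
    have hPW1 : 0 < PW := h0.trans_le (Finset.single_le_sum (f := fun as => P (as, w, zs))
      (fun i _ => hP _) (Finset.mem_univ as))
    have hQ1 : ∀ i, 0 < Q i (as i) := fun i => by
      have := Finset.single_le_sum (f := fun bs : Fin n → A => if bs i = as i then P (bs, w, zs) else 0)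
        (fun bs _ => by
          split_ifs
          · exact hP _
          · exact le_rfl) (Finset.mem_univ as)
      simp only [if_true] at this
      exact h0.trans_le this
    have hr1 : ∀ i, 0 < r (as i, zs i) := by
      have : 0 < ∏ i, r (as i, zs i) := by
        rw [← hPr]
        exact h0.trans_le (Finset.single_le_sum (f := fun w => P (as, w, zs))
          (fun i _ => hP _) (Finset.mem_univ w))
      intro i
      refine (hr.1 _).lt_of_ne fun h => ?_
      rw [Finset.prod_eq_zero (Finset.mem_univ i) h.symm] at this
      exact lt_irrefl _ this
    have hrz : ∀ i, 0 < ∑ a, r (a, zs i) := fun i =>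
      (hr1 i).trans_le (Finset.single_le_sum (f := fun a => r (a, zs i))
          (fun i _ => hr.1 _) (Finset.mem_univ (as i)))
    have e1 : ∀ i, Real.log (single P (as i, (i, w, zs), zs i) * (∑ a, r (a, zs i)) /
        (r (as i, zs i) * ((1 / (n : ℝ)) * PW))) = Real.log ((∑ a, r (a, zs i)) / r (as i, zs i)) +
          Real.log (Q i (as i) / PW) := by
      intro i
      have := hrz i; have := hr1 i; have := hQ1 i
      rw [← Real.log_mul (by positivity) (by positivity), hsQ]
      congr 1
      field_simp
    have pr1 : 0 < ∏ i, r (as i, zs i) := Finset.prod_pos fun i _ => hr1 i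
    have pr2 : 0 < ∏ i, ∑ a, r (a, zs i) := Finset.prod_pos fun i _ => hrz i
    have pr3 : 0 < ∏ i, Q i (as i) / PW := Finset.prod_pos fun i _ => div_pos (hQ1 i) hPW1
    have e2 : ∑ i, Real.log (single P (as i, (i, w, zs), zs i) * (∑ a, r (a, zs i)) /
        (r (as i, zs i) * ((1 / (n : ℝ)) * PW))) =
        Real.log (P (as, w, zs) * (∏ i, ∑ a, r (a, zs i)) / ((∏ i, r (as i, zs i)) * PW)) +
        Real.log (PW * (∏ i, Q i (as i) / PW) / P (as, w, zs)) := by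
      simp only [e1]
      rw [Finset.sum_add_distrib, ← Real.log_prod (fun i _ => (div_pos (hrz i) (hr1 i)).ne'),
        ← Real.log_prod (fun i _ => (div_pos (hQ1 i) hPW1).ne'),
        ← Real.log_mul (by rw [Finset.prod_div_distrib]; positivity) pr3.ne',
        ← Real.log_mul (by positivity) (by positivity), Finset.prod_div_distrib]
      congr 1
      field_simp
    have g := gibbs_term h0 (v := PW * (∏ i, Q i (as i) / PW) / P (as, w, zs)) (by positivity)
    have e3 : P (as, w, zs) * (PW * (∏ i, Q i (as i) / PW) / P (as, w, zs) - 1) =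
      PW * (∏ i, Q i (as i) / PW) - P (as, w, zs) := by
      rw [mul_sub, mul_div_cancel₀ _ h0.ne', mul_one]
    rw [e2, mul_add]
    linarith
  refine (Finset.sum_le_sum fun as _ => term as).trans ?_
  rw [Finset.sum_add_distrib, Finset.sum_sub_distrib, ← Finset.mul_sum, ← hPW]
  have e4 : ∑ as : Fin n → A, ∏ i, Q i (as i) / PW = ∏ i, ∑ a, Q i a / PW := by
    rw [Finset.prod_univ_sum, Fintype.piFinset_univ]
  have e5 : ∏ i, ∑ a, Q i a / PW ≤ 1 := by
    refine Finset.prod_le_one (fun i _ => Finset.sum_nonneg fun a _ => div_nonneg (hQ0 _ _) hPW0) ?_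
    intro i _
    rw [← Finset.sum_div, hQs]
    exact div_self_le_one _
  rw [e4]
  have := mul_le_mul_of_nonneg_left e5 hPW0
  linarith

lemma dTV_bdd {α : Type*} [Fintype α] (p q : α → ℝ) :
    BddAbove (Set.range fun A : Finset α => |∑ x ∈ A, p x - ∑ x ∈ A, q x|) :=
  (Set.finite_range _).bddAbove

lemma dTV_nonneg {α : Type*} [Fintype α] (p q : α → ℝ) : 0 ≤ dTV p q :=
  Real.iSup_nonneg fun _ => abs_nonneg _

lemma dTV_self {α : Type*} [Fintype α] (p : α → ℝ) : dTV p p = 0 := by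
  simp [dTV]

lemma dTV_le_one {α : Type*} [Fintype α] (p q : α → ℝ) (hp : IsPMF p) (hq : IsPMF q) :
    dTV p q ≤ 1 := by
  refine ciSup_le fun A => ?_
  have h1 : ∑ x ∈ A, p x ≤ 1 := by
    rw [← hp.2]; exact Finset.sum_le_sum_of_subset_of_nonneg (Finset.subset_univ _) fun _ _ _ => hp.1 _
  have h2 : ∑ x ∈ A, q x ≤ 1 := by
    rw [← hq.2]; exact Finset.sum_le_sum_of_subset_of_nonneg (Finset.subset_univ _) fun _ _ _ => hq.1 _
  have h3 : 0 ≤ ∑ x ∈ A, p x := Finset.sum_nonneg fun _ _ => hp.1 _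
  have h4 : 0 ≤ ∑ x ∈ A, q x := Finset.sum_nonneg fun _ _ => hq.1 _
  rw [abs_le]; constructor <;> linarith

lemma prodDist_pmf {α : Type*} [Fintype α] (n : ℕ) (p : α → ℝ) (hp : IsPMF p) :
    IsPMF (prodDist n p) := by
  classical
  refine ⟨fun x => Finset.prod_nonneg fun _ _ => hp.1 _, ?_⟩
  have : ∏ _i : Fin n, ∑ x, p x = ∑ xs : Fin n → α, ∏ i, p (xs i) := by
    rw [Finset.prod_univ_sum, Fintype.piFinset_univ]
  unfold prodDist
  rw [← this, hp.2]; simp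

lemma limsupTV_le_one {α : Type*} [Fintype α] (p q : α → ℝ) (hp : IsPMF p) (hq : IsPMF q) :
    limsupTV p q ≤ 1 := by
  refine Filter.limsup_le_of_le ?_ ?_
  · refine Filter.IsCoboundedUnder.of_frequently_ge (a := 0) ?_
    exact Filter.Frequently.of_forall fun n => dTV_nonneg _ _
  · exact Filter.Eventually.of_forall fun n =>
      dTV_le_one _ _ (prodDist_pmf n p hp) (prodDist_pmf n q hq)

lemma limsupTV_nonneg {α : Type*} [Fintype α] (p q : α → ℝ) (hp : IsPMF p) (hq : IsPMF q) :
    0 ≤ limsupTV p q := by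
  refine Filter.le_limsup_of_frequently_le ?_ ?_
  · exact Filter.Frequently.of_forall fun n => dTV_nonneg _ _
  · exact Filter.isBoundedUnder_of ⟨1, fun n =>
      dTV_le_one _ _ (prodDist_pmf n p hp) (prodDist_pmf n q hq)⟩

lemma limsupTV_self {α : Type*} [Fintype α] (p : α → ℝ) : limsupTV p p = 0 := by
  simp [limsupTV, dTV_self]

lemma margX3_pmf {X Y Z : Type*} [Fintype X] [Fintype Y] [Fintype Z] (q : X × Y × Z → ℝ)
    (hq : IsPMF q) : IsPMF (margX3 q) := by
  refine ⟨fun x => Finset.sum_nonneg fun _ _ => Finset.sum_nonneg fun _ _ => hq.1 _, ?_⟩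
  rw [← hq.2]; simp [margX3, Fintype.sum_prod_type]

lemma margY3_pmf {X Y Z : Type*} [Fintype X] [Fintype Y] [Fintype Z] (q : X × Y × Z → ℝ)
    (hq : IsPMF q) : IsPMF (margY3 q) := by
  refine ⟨fun x => Finset.sum_nonneg fun _ _ => Finset.sum_nonneg fun _ _ => hq.1 _, ?_⟩
  rw [← hq.2]; simp only [margY3, Fintype.sum_prod_type]
  rw [Finset.sum_comm]

lemma fFun_le_one {X Z : Type*} [Fintype X] [Fintype Z] (pXZ : X × Z → ℝ) (D : X → X → ℝ) (Δ : ℝ) :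
    fFun pXZ D Δ ≤ 1 := by
  unfold fFun gFun
  set S := {v | ∃ q : X × X × Z → ℝ,
    IsPMF q ∧ margXZ3 q = pXZ ∧ condMI q ≤ Rdist pXZ D Δ ∧ expD3 q D ≤ Δ ∧
      v = limsupTV (margX3 q) (margY3 q)} with hS
  rcases S.eq_empty_or_nonempty with h | ⟨v, hv⟩
  · rw [h]; simp
  · have hb : BddBelow S := ⟨0, by
      rintro v ⟨q, hq, -, -, -, rfl⟩
      exact limsupTV_nonneg _ _ (margX3_pmf q hq) (margY3_pmf q hq)⟩
    refine (csInf_le hb hv).trans ?_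
    obtain ⟨q, hq, -, -, -, rfl⟩ := hv
    exact limsupTV_le_one _ _ (margX3_pmf q hq) (margY3_pmf q hq)

lemma one_sub_dTV_le {α : Type*} [Fintype α] (p q : α → ℝ) (hp : IsPMF p) (hq : IsPMF q) :
    1 - dTV p q ≤ ∑ x, Real.sqrt (p x * q x) := by
  classical
  have h1 : |∑ x ∈ Finset.univ.filter (fun x => q x ≤ p x), p x -
      ∑ x ∈ Finset.univ.filter (fun x => q x ≤ p x), q x| ≤ dTV p q :=
    le_ciSup (dTV_bdd p q) _
  have h2 := (le_abs_self _).trans h1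
  rw [← Finset.sum_sub_distrib, Finset.sum_filter] at h2
  have h3 : ∑ x, p x - ∑ x, (if q x ≤ p x then p x - q x else 0) ≤ ∑ x, Real.sqrt (p x * q x) := by
    rw [← Finset.sum_sub_distrib]
    refine Finset.sum_le_sum fun x _ => ?_
    have := hp.1 x; have := hq.1 x
    apply Real.le_sqrt_of_sq_le
    split_ifs <;> nlinarith
  rw [hp.2] at h3
  linarith

lemma bc_prod {α : Type*} [Fintype α] (n : ℕ) (p q : α → ℝ) (hp : IsPMF p) (hq : IsPMF q) :
    ∑ x, Real.sqrt (prodDist n p x * prodDist n q x) = (∑ x, Real.sqrt (p x * q x)) ^ n := by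
  classical
  have : ∏ _i : Fin n, ∑ x, Real.sqrt (p x * q x) =
      ∑ xs : Fin n → α, ∏ i, Real.sqrt (p (xs i) * q (xs i)) := by
    rw [Finset.prod_univ_sum, Fintype.piFinset_univ]
  simp only [Finset.prod_const, Finset.card_univ, Fintype.card_fin] at this
  rw [this]
  refine Finset.sum_congr rfl fun xs _ => ?_
  unfold prodDist
  rw [← Finset.prod_mul_distrib, Real.sqrt_prod]
  exact fun i _ => mul_nonneg (hp.1 _) (hq.1 _)

lemma l1_sq_le {α : Type*} [Fintype α] (p q : α → ℝ) (hp : IsPMF p) (hq : IsPMF q) :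
    (∑ x, |p x - q x|) ^ 2 ≤ 8 * (1 - ∑ x, Real.sqrt (p x * q x)) ∧
      ∑ x, Real.sqrt (p x * q x) ≤ 1 := by
  set b := ∑ x, Real.sqrt (p x * q x) with hb
  have e : ∀ x, |p x - q x| = |Real.sqrt (p x) - Real.sqrt (q x)| * (Real.sqrt (p x) + Real.sqrt (q x)) := by
    intro x
    conv_lhs => rw [← Real.mul_self_sqrt (hp.1 x), ← Real.mul_self_sqrt (hq.1 x)]
    rw [mul_self_sub_mul_self, abs_mul, mul_comm,
      abs_of_nonneg (a := Real.sqrt (p x) + Real.sqrt (q x)) (by positivity)]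
  have cs := Finset.sum_mul_sq_le_sq_mul_sq Finset.univ
    (fun x => |Real.sqrt (p x) - Real.sqrt (q x)|) (fun x => Real.sqrt (p x) + Real.sqrt (q x))
  have e1 : ∑ x, |Real.sqrt (p x) - Real.sqrt (q x)| ^ 2 = 2 - 2 * b := by
    have : ∀ x, |Real.sqrt (p x) - Real.sqrt (q x)| ^ 2 = p x + q x - 2 * Real.sqrt (p x * q x) := by
      intro x
      rw [sq_abs, Real.sqrt_mul (hp.1 x)]
      nlinarith [Real.sq_sqrt (hp.1 x), Real.sq_sqrt (hq.1 x)]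
    simp only [this]
    rw [Finset.sum_sub_distrib, Finset.sum_add_distrib, ← Finset.mul_sum, hp.2, hq.2]; ring
  have e2 : ∑ x, (Real.sqrt (p x) + Real.sqrt (q x)) ^ 2 = 2 + 2 * b := by
    have : ∀ x, (Real.sqrt (p x) + Real.sqrt (q x)) ^ 2 = p x + q x + 2 * Real.sqrt (p x * q x) := by
      intro x
      rw [Real.sqrt_mul (hp.1 x)]
      nlinarith [Real.sq_sqrt (hp.1 x), Real.sq_sqrt (hq.1 x)]
    simp only [this]
    rw [Finset.sum_add_distrib, Finset.sum_add_distrib, ← Finset.mul_sum, hp.2, hq.2]; ring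
  have hb1 : b ≤ 1 := by
    have : 0 ≤ ∑ x, |Real.sqrt (p x) - Real.sqrt (q x)| ^ 2 := Finset.sum_nonneg fun _ _ => by positivity
    rw [e1] at this; linarith
  refine ⟨?_, hb1⟩
  simp only [e]
  rw [e1, e2] at cs
  nlinarith

lemma l1_small {α : Type*} [Fintype α] (c η : ℝ) (hc : c < 1) (hη : 0 < η) :
    ∃ n₁ : ℕ, ∀ n ≥ n₁, ∀ p q : α → ℝ, IsPMF p → IsPMF q →
      dTV (prodDist n p) (prodDist n q) ≤ c → ∑ x, |p x - q x| ≤ η := by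
  set θ := min (1/2) (η ^ 2 / 8) with hθ
  have hθ0 : 0 < θ := by positivity
  have hθ1 : θ ≤ 1/2 := min_le_left _ _
  have hθ2 : θ ≤ η ^ 2 / 8 := min_le_right _ _
  have ht := tendsto_pow_atTop_nhds_zero_of_lt_one (r := 1 - θ) (by linarith) (by linarith)
  have hev := ht.eventually_lt_const (u := 1 - c) (by linarith)
  obtain ⟨n₁, hn₁⟩ := Filter.eventually_atTop.1 hev
  refine ⟨n₁, fun n hn p q hp hq hd => ?_⟩
  have h1 := one_sub_dTV_le _ _ (prodDist_pmf n p hp) (prodDist_pmf n q hq)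
  rw [bc_prod n p q hp hq] at h1
  have h2 := hn₁ n hn
  have h3 : 1 - θ < ∑ x, Real.sqrt (p x * q x) := by
    by_contra hcon
    push Not at hcon
    have := pow_le_pow_left₀ (Finset.sum_nonneg fun x _ => Real.sqrt_nonneg (p x * q x)) hcon n
    linarith
  have h4 := (l1_sq_le p q hp hq).1
  refine abs_le_of_sq_le_sq' (b := η) ?_ hη.le |>.2
  linarith

lemma max_coupling {α : Type*} [Fintype α] (P Q : α → ℝ) (hP : IsPMF P) (hQ : IsPMF Q) :
    ∃ W : α → α → ℝ, (∀ y y', 0 ≤ W y y') ∧ (∀ y, ∑ y', W y y' = 1) ∧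
      (∀ y', ∑ y, Q y * W y y' = P y') ∧ ∑ y, Q y * (1 - W y y) ≤ ∑ y, |P y - Q y| := by
  classical
  set T := ∑ y, max (P y - Q y) 0 with hT
  have hT0 : 0 ≤ T := Finset.sum_nonneg fun _ _ => le_max_right _ _
  rcases hT0.eq_or_lt with h0 | h0
  · have hle : ∀ y, P y ≤ Q y := by
      intro y
      have := (Finset.sum_eq_zero_iff_of_nonneg (fun y _ => le_max_right (P y - Q y) 0)).1 h0.symm y
        (Finset.mem_univ y)
      have h2 := le_max_left (P y - Q y) 0
      linarith
    have hPQ : ∀ y, P y = Q y := by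
      have := (Finset.sum_eq_sum_iff_of_le (s := Finset.univ) (fun y _ => hle y)).1 (by rw [hP.2, hQ.2])
      exact fun y => this y (Finset.mem_univ y)
    refine ⟨fun y y' => if y = y' then 1 else 0, ?_, ?_, ?_, ?_⟩
    · intro y y'
      dsimp only
      split_ifs <;> norm_num
    · intro y; simp
    · intro y; simp [hPQ]
    · simpa using Finset.sum_nonneg fun y _ => abs_nonneg (P y - Q y)
  set m : α → ℝ := fun y => min 1 (P y / Q y) with hm
  have hm0 : ∀ y, 0 ≤ m y := fun y => le_min zero_le_one (div_nonneg (hP.1 y) (hQ.1 y))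
  have hm1 : ∀ y, m y ≤ 1 := fun y => min_le_left _ _
  have hmQ : ∀ y, Q y * m y = P y - max (P y - Q y) 0 := by
    intro y
    rcases (hQ.1 y).eq_or_lt with h | h
    · rw [← h]; simp [max_eq_left (hP.1 y)]
    · simp only [hm]
      rcases le_total (P y) (Q y) with h' | h'
      · rw [min_eq_right (by rw [div_le_one h]; exact h'), max_eq_right (by linarith)]
        field_simp; ring
      · rw [min_eq_left (by rw [one_le_div h]; exact h'), max_eq_left (by linarith)]
        ring
  refine ⟨fun y y' => (if y = y' then m y else 0) + (1 - m y) * (max (P y' - Q y') 0 / T), ?_, ?_, ?_, ?_⟩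
  · intro y y'
    refine add_nonneg ?_ (mul_nonneg (by linarith [hm1 y]) (div_nonneg (le_max_right _ _) hT0))
    split_ifs
    · exact hm0 y
    · exact le_rfl
  · intro y
    rw [Finset.sum_add_distrib, ← Finset.mul_sum, ← Finset.sum_div, ← hT, div_self h0.ne']
    simp
  · intro y'
    simp only [mul_add, Finset.sum_add_distrib, mul_ite, mul_zero, Finset.sum_ite_eq', Finset.mem_univ, if_true]
    have : ∑ y, Q y * ((1 - m y) * (max (P y' - Q y') 0 / T)) = max (P y' - Q y') 0 := by
      have e : ∑ y, Q y * ((1 - m y) * (max (P y' - Q y') 0 / T)) =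
          (∑ y, Q y - ∑ y, Q y * m y) * (max (P y' - Q y') 0 / T) := by
        rw [← Finset.sum_sub_distrib, Finset.sum_mul]
        exact Finset.sum_congr rfl fun y _ => by ring
      rw [e]
      simp only [hmQ]
      rw [Finset.sum_sub_distrib, hP.2, hQ.2, ← hT]
      field_simp; ring
    rw [this, hmQ]; ring
  · refine Finset.sum_le_sum fun y _ => ?_
    simp only [if_true]
    have h1 : 0 ≤ Q y * ((1 - m y) * (max (P y - Q y) 0 / T)) :=
      mul_nonneg (hQ.1 y) (mul_nonneg (by linarith [hm1 y]) (div_nonneg (le_max_right _ _) hT0))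
    have h2 := hmQ y
    have h3 : Q y - P y + max (P y - Q y) 0 ≤ |P y - Q y| := by
      rcases le_total (P y) (Q y) with h' | h'
      · rw [max_eq_right (by linarith), abs_of_nonpos (by linarith)]; linarith
      · rw [max_eq_left (by linarith), abs_of_nonneg (by linarith)]; linarith
    nlinarith

lemma floor_log {n : ℕ} (hn : 0 < n) {a : ℝ} (hN : 0 < ⌊(2 : ℝ) ^ ((n : ℝ) * a)⌋₊) :
    0 ≤ a ∧ (1 / (n : ℝ)) * Real.log (⌊(2 : ℝ) ^ ((n : ℝ) * a)⌋₊ : ℝ) ≤ a := by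
  have hn' : (0 : ℝ) < n := by exact_mod_cast hn
  have h1 : (1 : ℝ) ≤ (2 : ℝ) ^ ((n : ℝ) * a) := Nat.floor_pos.1 hN
  have ha : 0 ≤ a := by
    by_contra hcon
    push Not at hcon
    have := Real.rpow_lt_one_of_one_lt_of_neg (x := 2) (z := (n : ℝ) * a) (by norm_num) (by nlinarith)
    linarith
  refine ⟨ha, ?_⟩
  have h2 : Real.log (⌊(2 : ℝ) ^ ((n : ℝ) * a)⌋₊ : ℝ) ≤ (n * a) * Real.log 2 := by
    rw [← Real.log_rpow (by norm_num)]
    exact Real.log_le_log (by exact_mod_cast hN) (Nat.floor_le (by positivity))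
  have h3 : Real.log 2 ≤ 1 := by linarith [Real.log_two_lt_d9]
  have h4 : (n * a) * Real.log 2 ≤ n * a := mul_le_of_le_one_right (by positivity) h3
  rw [one_div, inv_mul_le_iff₀ hn']
  linarith

lemma code_pos {X Z : Type*} [Fintype X] [Fintype Z] {n N N0 : ℕ} (pXZ : X × Z → ℝ)
    (enc : (Fin n → X) → (Fin n → Z) → Fin N0 → Fin N → ℝ)
    (dec : Fin N → (Fin n → Z) → Fin N0 → (Fin n → X) → ℝ)
    (r : X × Z → ℝ) (hr : IsPMF r)
    (hYZ : ∀ ys zs, codeYZ pXZ enc dec (ys, zs) = ∏ i, r (ys i, zs i)) : 0 < N ∧ 0 < N0 := by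
  have h1 : ∑ ys : Fin n → X, ∑ zs : Fin n → Z, ∏ i, r (ys i, zs i) = 1 := by
    rw [sum_prod_pair (fun _ a z => r (a, z))]
    have : ∑ a, ∑ z, r (a, z) = 1 := by rw [← hr.2, Fintype.sum_prod_type]
    simp [this]
  simp only [← hYZ] at h1
  constructor
  · rcases Nat.eq_zero_or_pos N with h | h
    · subst h; simp [codeYZ] at h1
    · exact h
  · rcases Nat.eq_zero_or_pos N0 with h | h
    · subst h; simp [codeYZ] at h1
    · exact h

lemma single_letter {X Z : Type} [Fintype X] [Fintype Z] {n N N0 : ℕ} (hn : 0 < n)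
    (hN : 0 < N) (hN0 : 0 < N0) (pXZ : X × Z → ℝ) (hpXZ : IsPMF pXZ) (D : X → X → ℝ)
    (enc : (Fin n → X) → (Fin n → Z) → Fin N0 → Fin N → ℝ)
    (dec : Fin N → (Fin n → Z) → Fin N0 → (Fin n → X) → ℝ)
    (henc : ∀ xs zs k, IsPMF (enc xs zs k)) (hdec : ∀ m zs k, IsPMF (dec m zs k))
    (r : X × Z → ℝ) (hr : IsPMF r)
    (hYZ : ∀ ys zs, codeYZ pXZ enc dec (ys, zs) = ∏ i, r (ys i, zs i)) :
    ∃ (U : Type) (_ : Fintype U) (p : X × U × Z → ℝ) (V : U → X → ℝ),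
      (∀ w, 0 ≤ p w) ∧ (∀ u, IsPMF (V u)) ∧ (∀ x z, ∑ u, p (x, u, z) = pXZ (x, z)) ∧
      (∀ y z, ∑ u, ∑ x, p (x, u, z) * V u y = r (y, z)) ∧
      condMI p ≤ (1 / (n : ℝ)) * Real.log N ∧
      condMI (fun w : X × U × Z => ∑ x, p (x, w.2.1, w.2.2) * V w.2.1 w.1) ≤
        (1 / (n : ℝ)) * Real.log (N * N0) ∧
      ∑ x, ∑ u, ∑ z, p (x, u, z) * ∑ y, V u y * D x y = codeExpDist pXZ enc dec D := by
  classical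
  have hN0' : (0 : ℝ) < N0 := by exact_mod_cast hN0
  have hN' : (0 : ℝ) < N := by exact_mod_cast hN
  have : Nonempty (Fin N × Fin N0) := ⟨⟨0, hN⟩, ⟨0, hN0⟩⟩
  set PX : (Fin n → X) × (Fin N × Fin N0) × (Fin n → Z) → ℝ := fun w =>
    (∏ i, pXZ (w.1 i, w.2.2 i)) * (1 / (N0 : ℝ)) * enc w.1 w.2.2 w.2.1.2 w.2.1.1 with hPX
  set PY : (Fin n → X) × (Fin N × Fin N0) × (Fin n → Z) → ℝ := fun w =>
    (∑ xs, PX (xs, w.2.1, w.2.2)) * dec w.2.1.1 w.2.2 w.2.1.2 w.1 with hPY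
  set V : (Fin n × (Fin N × Fin N0) × (Fin n → Z)) → X → ℝ := fun u y =>
    ∑ ys : Fin n → X, if ys u.1 = y then dec u.2.1.1 u.2.2 u.2.1.2 ys else 0 with hV
  have hPX0 : ∀ w, 0 ≤ PX w := fun w => mul_nonneg (mul_nonneg
    (Finset.prod_nonneg fun _ _ => hpXZ.1 _) (by positivity)) ((henc _ _ _).1 _)
  have hPY0 : ∀ w, 0 ≤ PY w := fun w => mul_nonneg (Finset.sum_nonneg fun _ _ => hPX0 _) ((hdec _ _ _).1 _)
  have hPXr : ∀ xs zs, ∑ w, PX (xs, w, zs) = ∏ i, pXZ (xs i, zs i) := by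
    intro xs zs
    simp only [hPX, Fintype.sum_prod_type]
    rw [Finset.sum_comm]
    simp only [← Finset.mul_sum, (henc _ _ _).2, mul_one]
    simp [hN0'.ne']
  have hPYr : ∀ ys zs, ∑ w, PY (ys, w, zs) = ∏ i, r (ys i, zs i) := by
    intro ys zs
    rw [← hYZ]
    simp only [hPY, Fintype.sum_prod_type, codeYZ, codeJoint, Finset.sum_mul]
    rw [Finset.sum_comm]
    rw [Finset.sum_comm (s := (Finset.univ : Finset (Fin n → X)))]
    refine Finset.sum_congr rfl fun k _ => ?_
    rw [Finset.sum_comm]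
  have hVs : ∀ y u z, single PY (y, u, z) = ∑ x, single PX (x, u, z) * V u y := by
    rintro y ⟨i, w, zs⟩ z
    rw [← Finset.sum_mul, single_margA]
    simp only [single, hV, hPY]
    split_ifs
    · rw [mul_assoc]
      congr 1
      rw [Finset.mul_sum]
      refine Finset.sum_congr rfl fun ys _ => ?_
      split_ifs <;> simp
    · simp
  have hsumOne : ∀ (r : X × Z → ℝ), IsPMF r → ∀ P : (Fin n → X) × (Fin N × Fin N0) × (Fin n → Z) → ℝ,
      (∀ xs zs, ∑ w, P (xs, w, zs) = ∏ i, r (xs i, zs i)) → ∑ a, ∑ w, ∑ z, P (a, w, z) = 1 := by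
    intro r hr P hP
    have : ∑ a, ∑ w, ∑ z, P (a, w, z) = ∑ a : Fin n → X, ∑ z : Fin n → Z, ∏ i, r (a i, z i) := by
      refine Finset.sum_congr rfl fun a _ => ?_
      rw [Finset.sum_comm]
      exact Finset.sum_congr rfl fun z _ => hP a z
    rw [this, sum_prod_pair (fun _ a z => r (a, z))]
    have : ∑ a, ∑ z, r (a, z) = 1 := by rw [← hr.2, Fintype.sum_prod_type]
    simp [this]
  refine ⟨Fin n × (Fin N × Fin N0) × (Fin n → Z), inferInstance, single PX, V,
    single_nonneg PX hPX0, ?_, single_margU hn PX pXZ hpXZ hPXr, ?_, ?_, ?_, ?_⟩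
  · intro u
    refine ⟨fun y => Finset.sum_nonneg fun ys _ => ?_, ?_⟩
    · split_ifs
      · exact (hdec _ _ _).1 _
      · exact le_rfl
    · simp only [hV]
      rw [Finset.sum_comm]
      simp [(hdec _ _ _).2]
  · intro y z
    simp only [← hVs]
    exact single_margU hn PY r hr hPYr y z
  · refine (condMI_single hn PX hPX0 pXZ hpXZ hPXr).trans ?_
    refine mul_le_mul_of_nonneg_left ?_ (by positivity)
    have h := condMI_le_log PX hPX0 (hsumOne pXZ hpXZ PX hPXr) (1 / (N0 : ℝ)) (by positivity) ?_
    · refine h.trans (le_of_eq ?_)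
      congr 1
      simp only [Fintype.card_prod, Fintype.card_fin, Nat.cast_mul]
      field_simp
    · intro xs w zs
      rw [hPXr, mul_comm]
      refine mul_le_of_le_one_right (mul_nonneg (Finset.prod_nonneg fun _ _ => hpXZ.1 _) (by positivity)) ?_
      rw [← (henc xs zs w.2).2]
      exact Finset.single_le_sum (fun i _ => (henc xs zs w.2).1 i) (Finset.mem_univ _)
  · have e : (fun w : X × (Fin n × (Fin N × Fin N0) × (Fin n → Z)) × Z =>
        ∑ x, single PX (x, w.2.1, w.2.2) * V w.2.1 w.1) = single PY := by
      funext w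
      exact (hVs w.1 w.2.1 w.2.2).symm
    rw [e]
    refine (condMI_single hn PY hPY0 r hr hPYr).trans ?_
    refine mul_le_mul_of_nonneg_left ?_ (by positivity)
    have h := condMI_le_log PY hPY0 (hsumOne r hr PY hPYr) 1 one_pos ?_
    · refine h.trans (le_of_eq ?_)
      simp
    · intro ys w zs
      rw [one_mul]
      exact Finset.single_le_sum (f := fun w => PY (ys, w, zs)) (fun i _ => hPY0 _) (Finset.mem_univ _)
  · rw [single_sum PX (fun x u _ => ∑ y, V u y * D x y)]
    have e : ∀ (x : X) i w zs, ∑ y, V (i, w, zs) y * D x y =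
        ∑ ys : Fin n → X, dec w.1 zs w.2 ys * D x (ys i) := by
      intro x i w zs
      simp only [hV, Finset.sum_mul, ite_mul, zero_mul]
      rw [Finset.sum_comm]
      simp
    simp only [e]
    unfold codeExpDist codeJoint
    simp only [Fintype.sum_prod_type]
    rw [Finset.mul_sum]
    refine Finset.sum_congr rfl fun xs _ => ?_
    have e2 : ∀ m k zs, PX (xs, (m, k), zs) * ∑ i, ∑ ys : Fin n → X, dec m zs k ys * D (xs i) (ys i)
        = ∑ ys : Fin n → X, (∏ i, pXZ (xs i, zs i)) * (1 / (N0 : ℝ)) * enc xs zs k m * dec m zs k ys *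
          (∑ i, D (xs i) (ys i)) := by
      intro m k zs
      rw [Finset.sum_comm, Finset.mul_sum]
      refine Finset.sum_congr rfl fun ys _ => ?_
      rw [← Finset.mul_sum, ← mul_assoc]
    simp only [e2]
    have e3 : ∀ f : Fin N → Fin N0 → (Fin n → Z) → ℝ, ∑ m, ∑ k, ∑ zs, f m k zs = ∑ zs, ∑ k, ∑ m, f m k zs := by
      intro f
      rw [Finset.sum_comm]
      rw [Finset.sum_comm (s := (Finset.univ : Finset (Fin n → Z)))]
      refine Finset.sum_congr rfl fun k _ => ?_
      rw [Finset.sum_comm]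
    rw [e3]
    simp only [Finset.mul_sum]
    refine Finset.sum_congr rfl fun zs _ => Finset.sum_congr rfl fun k _ => Finset.sum_congr rfl fun m _ =>
      Finset.sum_congr rfl fun ys _ => Finset.sum_congr rfl fun i _ => ?_
    ring

lemma codeOutY_eq {X Z : Type*} [Fintype X] [Fintype Z] {n N N0 : ℕ} (pXZ : X × Z → ℝ)
    (enc : (Fin n → X) → (Fin n → Z) → Fin N0 → Fin N → ℝ)
    (dec : Fin N → (Fin n → Z) → Fin N0 → (Fin n → X) → ℝ)
    (r : X × Z → ℝ)
    (hYZ : ∀ ys zs, codeYZ pXZ enc dec (ys, zs) = ∏ i, r (ys i, zs i)) :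
    codeOutY pXZ enc dec = prodDist n (fun y => ∑ z, r (y, z)) := by
  classical
  funext ys
  have e : codeOutY pXZ enc dec ys = ∑ zs, codeYZ pXZ enc dec (ys, zs) := by
    unfold codeOutY codeYZ
    rw [Finset.sum_comm]
  rw [e]
  simp only [hYZ, prodDist]
  rw [Finset.prod_univ_sum, Fintype.piFinset_univ]

lemma marg_pmf {X Z : Type*} [Fintype X] [Fintype Z] (r : X × Z → ℝ) (hr : IsPMF r) :
    IsPMF (fun x => ∑ z, r (x, z)) :=
  ⟨fun x => Finset.sum_nonneg fun _ _ => hr.1 _, by rw [← hr.2, Fintype.sum_prod_type]⟩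

lemma splus_of {X Z : Type} [Fintype X] [Fintype Z] (pXZ : X × Z → ℝ) (hpXZ : IsPMF pXZ)
    (D : X → X → ℝ) (γ R R0 Δ Pc : ℝ) {U : Type} [Fintype U] (p : X × U × Z → ℝ) (V : U → X → ℝ)
    (hp : ∀ w, 0 ≤ p w) (hV : ∀ u, IsPMF (V u)) (hpm : ∀ x z, ∑ u, p (x, u, z) = pXZ (x, z))
    (hI : condMI p + γ ≤ R) (hR0 : 0 ≤ R0)
    (hΔ : ∑ x, ∑ u, ∑ z, p (x, u, z) * ∑ y, V u y * D x y ≤ Δ)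
    (hf : fFun pXZ D Δ ≤ Pc) : (R, R0, Δ, Pc) ∈ RegionSplus pXZ D γ := by
  have hm : margXZ3 (fun w : X × X × Z => ∑ u, p (w.1, u, w.2.2) * V u w.2.1) = pXZ := by
    funext w
    unfold margXZ3
    simp only
    rw [Finset.sum_comm]
    simp only [← Finset.mul_sum, (hV _).2, mul_one, hpm]
  refine ⟨fun w => ∑ u, p (w.1, u, w.2.2) * V u w.2.1, ⟨fun w => Finset.sum_nonneg fun u _ =>
    mul_nonneg (hp _) ((hV _).1 _), ?_⟩, hm, hf, hR0, ?_, ?_⟩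
  · rw [← hpXZ.2, ← hm]
    unfold margXZ3
    simp only [Fintype.sum_prod_type]
    refine Finset.sum_congr rfl fun x _ => ?_
    rw [Finset.sum_comm]
  · have h := condMI_dpi (fun w : U × X × Z => p (w.2.1, w.1, w.2.2)) (fun w => hp _) V
      (fun u y => (hV u).1 y) (fun u => (hV u).2)
    rw [condMI_symm] at h
    rw [← condMI_symm]
    exact (add_le_add_left h γ).trans hI
  · refine le_trans (le_of_eq ?_) hΔ
    unfold expD3
    refine Finset.sum_congr rfl fun x _ => ?_
    simp only [Finset.sum_mul, Finset.mul_sum]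
    rw [Finset.sum_comm, Finset.sum_comm (s := (Finset.univ : Finset U))]
    refine Finset.sum_congr rfl fun z _ => ?_
    rw [Finset.sum_comm]
    refine Finset.sum_congr rfl fun u _ => Finset.sum_congr rfl fun y _ => ?_
    ring

lemma sminus_of {X Z : Type} [Fintype X] [Fintype Z] (pXZ : X × Z → ℝ) (hpXZ : IsPMF pXZ)
    (D : X → X → ℝ) (dmax : ℝ) (hD : ∀ x y, 0 ≤ D x y ∧ D x y ≤ dmax) (hd0 : 0 ≤ dmax)
    (γ R R0 Δ Δ' Pc η : ℝ) {U : Type} [Fintype U] (p : X × U × Z → ℝ) (V : U → X → ℝ)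
    (hp : ∀ w, 0 ≤ p w) (hV : ∀ u, IsPMF (V u)) (hpm : ∀ x z, ∑ u, p (x, u, z) = pXZ (x, z))
    (r : X × Z → ℝ) (hr : IsPMF r) (hpr : ∀ y z, ∑ u, ∑ x, p (x, u, z) * V u y = r (y, z))
    (hI : condMI p + γ ≤ R) (hR0 : 0 < R0)
    (hI2 : condMI (fun w : X × U × Z => ∑ x, p (x, w.2.1, w.2.2) * V w.2.1 w.1) + γ ≤ R + R0)
    (hΔ : ∑ x, ∑ u, ∑ z, p (x, u, z) * ∑ y, V u y * D x y ≤ Δ)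
    (hη : ∑ x, |∑ z, pXZ (x, z) - ∑ z, r (x, z)| ≤ η) (hΔ' : Δ + dmax * η ≤ Δ')
    (hPc : 0 ≤ Pc) (hf : Pc < fFun pXZ D Δ') : (R, R0, Δ', Pc) ∈ RegionSminus pXZ D γ := by
  obtain ⟨W, hW0, hW1, hWP, hWη⟩ := max_coupling (fun x => ∑ z, pXZ (x, z)) (fun y => ∑ z, r (y, z))
    (marg_pmf _ hpXZ) (marg_pmf _ hr)
  set V' : U → X → ℝ := fun u y' => ∑ y, V u y * W y y' with hV'
  have hV'0 : ∀ u y, 0 ≤ V' u y := fun u y => Finset.sum_nonneg fun _ _ => mul_nonneg ((hV _).1 _) (hW0 _ _)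
  have hV'1 : ∀ u, ∑ y, V' u y = 1 := by
    intro u
    simp only [hV']
    rw [Finset.sum_comm]
    simp only [← Finset.mul_sum, hW1, mul_one, (hV u).2]
  have hXm : ∀ x, ∑ y, ∑ u, ∑ z, p (x, u, z) * V' u y = ∑ z, pXZ (x, z) := by
    intro x
    rw [Finset.sum_comm]
    simp only [← Finset.sum_mul, ← Finset.mul_sum, hV'1, mul_one]
    rw [Finset.sum_comm]
    exact Finset.sum_congr rfl fun z _ => hpm x z
  have hQ : ∀ y, ∑ x, ∑ u, ∑ z, p (x, u, z) * V u y = ∑ z, r (y, z) := by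
    intro y
    simp only [← hpr]
    rw [Finset.sum_comm, Finset.sum_comm (s := (Finset.univ : Finset Z))]
    refine Finset.sum_congr rfl fun u _ => ?_
    rw [Finset.sum_comm]
  have hYm : ∀ y', ∑ x, ∑ u, ∑ z, p (x, u, z) * V' u y' = ∑ z, pXZ (y', z) := by
    intro y'
    rw [← hWP y']
    simp only [← hQ, hV', Finset.mul_sum, Finset.sum_mul]
    rw [Finset.sum_comm (s := (Finset.univ : Finset X)) (t := (Finset.univ : Finset X))]
    refine Finset.sum_congr rfl fun x _ => ?_
    rw [Finset.sum_comm (s := (Finset.univ : Finset X)) (t := (Finset.univ : Finset U))]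
    refine Finset.sum_congr rfl fun u _ => ?_
    rw [Finset.sum_comm]
    refine Finset.sum_congr rfl fun y _ => Finset.sum_congr rfl fun z _ => ?_
    ring
  refine ⟨U, inferInstance, fun w => p (w.1, w.2.2.1, w.2.2.2) * V' w.2.2.1 w.2.1, ?_, ?_, ?_, hf, hR0, ?_, ?_, ?_, ?_⟩
  · refine ⟨fun w => mul_nonneg (hp _) (hV'0 _ _), ?_⟩
    simp only [Fintype.sum_prod_type, hXm]
    rw [← hpXZ.2, Fintype.sum_prod_type]
  · intro x z
    simp only
    rw [Finset.sum_comm]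
    simp only [← Finset.mul_sum, hV'1, mul_one, hpm]
  · intro x y u z
    simp only [← Finset.mul_sum, ← Finset.sum_mul, hV'1, mul_one]
    ring
  · simp only [← Finset.mul_sum, hV'1, mul_one]
    exact hI
  · refine le_trans (add_le_add_left ?_ γ) hI2
    have h := condMI_dpi (fun w : X × U × Z => ∑ x, p (x, w.2.1, w.2.2) * V w.2.1 w.1)
      (fun w => Finset.sum_nonneg fun _ _ => mul_nonneg (hp _) ((hV _).1 _)) W hW0 hW1
    refine le_trans (le_of_eq ?_) h
    congr 1
    funext w
    simp only [hV', Finset.sum_mul, Finset.mul_sum]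
    rw [Finset.sum_comm]
    refine Finset.sum_congr rfl fun y _ => Finset.sum_congr rfl fun x _ => ?_
    ring
  · simp only
    have term : ∀ x u, ∑ y', V' u y' * D x y' ≤ ∑ y, V u y * D x y + dmax * ∑ y, V u y * (1 - W y y) := by
      intro x u
      have inner : ∀ y, ∑ y', W y y' * D x y' ≤ D x y + dmax * (1 - W y y) := by
        intro y
        classical
        have hsplit := Finset.sum_erase_add Finset.univ (fun y' => W y y' * D x y') (Finset.mem_univ y)
        have hsplit2 := Finset.sum_erase_add Finset.univ (fun y' => W y y') (Finset.mem_univ y)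
        rw [hW1] at hsplit2
        have h1 : ∑ y' ∈ Finset.univ.erase y, W y y' * D x y' ≤ (∑ y' ∈ Finset.univ.erase y, W y y') * dmax := by
          rw [Finset.sum_mul]
          exact Finset.sum_le_sum fun y' _ => mul_le_mul_of_nonneg_left (hD x y').2 (hW0 _ _)
        have h3 : 0 ≤ ∑ y' ∈ Finset.univ.erase y, W y y' := Finset.sum_nonneg fun _ _ => hW0 _ _
        have h2 : W y y * D x y ≤ D x y := mul_le_of_le_one_left (hD x y).1 (by linarith)
        have h4 : ∑ y' ∈ Finset.univ.erase y, W y y' = 1 - W y y := by linarith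
        rw [h4] at h1
        linarith
      calc ∑ y', V' u y' * D x y' = ∑ y, V u y * ∑ y', W y y' * D x y' := by
            simp only [hV', Finset.sum_mul, Finset.mul_sum]
            rw [Finset.sum_comm]
            simp only [mul_assoc]
        _ ≤ ∑ y, V u y * (D x y + dmax * (1 - W y y)) :=
            Finset.sum_le_sum fun y _ => mul_le_mul_of_nonneg_left (inner y) ((hV u).1 y)
        _ = _ := by
            rw [Finset.mul_sum, ← Finset.sum_add_distrib]
            exact Finset.sum_congr rfl fun y _ => by ring
    have e1 : ∑ x, ∑ y, ∑ u, ∑ z, p (x, u, z) * V' u y * D x y =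
        ∑ x, ∑ u, ∑ z, p (x, u, z) * ∑ y', V' u y' * D x y' := by
      refine Finset.sum_congr rfl fun x _ => ?_
      rw [Finset.sum_comm]
      refine Finset.sum_congr rfl fun u _ => ?_
      rw [Finset.sum_comm]
      refine Finset.sum_congr rfl fun z _ => ?_
      rw [Finset.mul_sum]
      exact Finset.sum_congr rfl fun y _ => by ring
    rw [e1]
    have e2 : ∑ x, ∑ u, ∑ z, p (x, u, z) * ∑ y, V u y * (1 - W y y) ≤ η := by
      refine le_trans (le_of_eq ?_) (hWη.trans hη)
      simp only [← hQ, Finset.mul_sum, Finset.sum_mul]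
      rw [Finset.sum_comm (s := (Finset.univ : Finset X)) (t := (Finset.univ : Finset X))]
      refine Finset.sum_congr rfl fun x _ => ?_
      rw [Finset.sum_comm (s := (Finset.univ : Finset X)) (t := (Finset.univ : Finset U))]
      refine Finset.sum_congr rfl fun u _ => ?_
      rw [Finset.sum_comm]
      refine Finset.sum_congr rfl fun y _ => Finset.sum_congr rfl fun z _ => ?_
      ring
    have e3 : ∑ x, ∑ u, ∑ z, p (x, u, z) * ∑ y', V' u y' * D x y' ≤
        ∑ x, ∑ u, ∑ z, p (x, u, z) * (∑ y, V u y * D x y + dmax * ∑ y, V u y * (1 - W y y)) :=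
      Finset.sum_le_sum fun x _ => Finset.sum_le_sum fun u _ => Finset.sum_le_sum fun z _ =>
        mul_le_mul_of_nonneg_left (term x u) (hp _)
    have e4 : ∑ x, ∑ u, ∑ z, p (x, u, z) * (∑ y, V u y * D x y + dmax * ∑ y, V u y * (1 - W y y)) =
        ∑ x, ∑ u, ∑ z, p (x, u, z) * (∑ y, V u y * D x y) + 
        dmax * ∑ x, ∑ u, ∑ z, p (x, u, z) * ∑ y, V u y * (1 - W y y) := by
      simp only [mul_add, Finset.sum_add_distrib]
      congr 1
      simp only [Finset.mul_sum]
      refine Finset.sum_congr rfl fun x _ => Finset.sum_congr rfl fun u _ =>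
        Finset.sum_congr rfl fun z _ => Finset.sum_congr rfl fun y _ => ?_
      ring
    have e5 := mul_le_mul_of_nonneg_left e2 hd0
    linarith
  · simp only [hXm, hYm]
    rw [limsupTV_self]
    exact hPc

lemma exists_near {X Z : Type} [Fintype X] [Fintype Z]
    (pXZ : X × Z → ℝ) (hpXZ : IsPMF pXZ)
    (D : X → X → ℝ) (dmax : ℝ) (hD : ∀ x y, 0 ≤ D x y ∧ D x y ≤ dmax)
    (R R0 Δ Pc : ℝ) (h : AchievableStrongIID pXZ D R R0 Δ Pc) (ε : ℝ) (hε : 0 < ε) :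
    (R + 2 * ε, R0 + 2 * ε, Δ + 2 * ε, Pc + 2 * ε) ∈
      (⋃ γ > (0 : ℝ), RegionSminus pXZ D γ ∪ RegionSplus pXZ D γ) := by
  simp only [Set.mem_iUnion]
  refine ⟨ε, hε, ?_⟩
  have hne : Nonempty X := by
    by_contra hcon
    rw [not_nonempty_iff] at hcon
    have := hpXZ.2
    simp at this
  have hd0 : 0 ≤ dmax := by
    obtain ⟨x⟩ := hne
    exact (hD x x).1.trans (hD x x).2
  obtain ⟨n₀, hn₀⟩ := h ε hε
  have main : ∀ n ≥ n₀, 0 < n → ∃ (U : Type) (_ : Fintype U) (p : X × U × Z → ℝ) (V : U → X → ℝ)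
      (r : X × Z → ℝ), (∀ w, 0 ≤ p w) ∧ (∀ u, IsPMF (V u)) ∧ (∀ x z, ∑ u, p (x, u, z) = pXZ (x, z)) ∧
      IsPMF r ∧ (∀ y z, ∑ u, ∑ x, p (x, u, z) * V u y = r (y, z)) ∧
      condMI p + ε ≤ R + 2 * ε ∧ 0 < R0 + 2 * ε ∧
      condMI (fun w : X × U × Z => ∑ x, p (x, w.2.1, w.2.2) * V w.2.1 w.1) + ε ≤
        (R + 2 * ε) + (R0 + 2 * ε) ∧
      ∑ x, ∑ u, ∑ z, p (x, u, z) * ∑ y, V u y * D x y ≤ Δ + ε ∧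
      dTV (prodDist n (fun x => ∑ z, pXZ (x, z))) (prodDist n (fun x => ∑ z, r (x, z))) ≤ Pc + ε := by
    intro n hn hn1
    obtain ⟨enc, dec, henc, hdec, hdist, htv, r, hr, hYZ⟩ := hn₀ n hn
    obtain ⟨hN, hN0⟩ := code_pos pXZ enc dec r hr hYZ
    obtain ⟨hR, hlN⟩ := floor_log hn1 hN
    obtain ⟨hR0, hlN0⟩ := floor_log hn1 hN0
    obtain ⟨U, iU, p, V, hp, hV, hpm, hpr, hI, hI2, hdd⟩ :=
      single_letter hn1 hN hN0 pXZ hpXZ D enc dec henc hdec r hr hYZ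
    rw [codeOutY_eq pXZ enc dec r hYZ] at htv
    rw [Real.log_mul (by exact_mod_cast hN.ne') (by exact_mod_cast hN0.ne'), mul_add] at hI2
    refine ⟨U, iU, p, V, r, hp, hV, hpm, hr, hpr, ?_, ?_, ?_, ?_, htv⟩
    · linarith
    · linarith
    · linarith
    · linarith
  rcases lt_or_ge (Pc + 2 * ε) (fFun pXZ D (Δ + 2 * ε)) with hf | hf
  · left
    have hc : Pc + ε < 1 := by linarith [fFun_le_one pXZ D (Δ + 2 * ε)]
    obtain ⟨n₁, hn₁⟩ := l1_small (α := X) (Pc + ε) (ε / (dmax + 1)) hc (by positivity)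
    obtain ⟨U, iU, p, V, r, hp, hV, hpm, hr, hpr, h1, h2, h3, h4, h5⟩ := main (max n₀ n₁ + 1) (by omega) (by omega)
    have hl1 := hn₁ (max n₀ n₁ + 1) (by omega) _ _ (marg_pmf _ hpXZ) (marg_pmf _ hr) h5
    refine sminus_of pXZ hpXZ D dmax hD hd0 ε (R + 2 * ε) (R0 + 2 * ε) (Δ + ε) (Δ + 2 * ε) (Pc + 2 * ε)
      (ε / (dmax + 1)) p V hp hV hpm r hr hpr h1 h2 h3 h4 hl1 ?_ ?_ hf
    · have : dmax * (ε / (dmax + 1)) ≤ ε := by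
        rw [← mul_div_assoc, div_le_iff₀ (by positivity)]
        nlinarith
      linarith
    · have := (dTV_nonneg _ _).trans h5
      linarith
  · right
    obtain ⟨U, iU, p, V, r, hp, hV, hpm, hr, hpr, h1, h2, h3, h4, h5⟩ := main (n₀ + 1) (by omega) (by omega)
    exact splus_of pXZ hpXZ D ε (R + 2 * ε) (R0 + 2 * ε) (Δ + 2 * ε) (Pc + 2 * ε) p V hp hV hpm h1 h2.le
      (by linarith) hf

/-- **Theorem 2 (converse, strong perception):** if `(R, R₀, Δ, Π)` is achievable with
respect to the strong perceptual constraint by codes whose reconstruction `Y^n` and side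
information `Z^n` are jointly i.i.d. sequences, then it lies in the closure of
`R^{(s)} = ⋃_{γ>0} (R_γ^{(s)-} ∪ R_γ^{(s)+})`. -/
theorem converse_strong_perception
    {X Z : Type} [Fintype X] [Fintype Z]
    (pXZ : X × Z → ℝ) (hpXZ : IsPMF pXZ)
    (D : X → X → ℝ) (dmax : ℝ) (hD : ∀ x y, 0 ≤ D x y ∧ D x y ≤ dmax)
    (R R0 Δ Pc : ℝ)
    (h : AchievableStrongIID pXZ D R R0 Δ Pc) :
    (R, R0, Δ, Pc) ∈
      closure (⋃ γ > (0 : ℝ), RegionSminus pXZ D γ ∪ RegionSplus pXZ D γ) := by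
  rw [Metric.mem_closure_iff]
  intro δ hδ
  refine ⟨_, exists_near pXZ hpXZ D dmax hD R R0 Δ Pc h (δ / 4) (by positivity), ?_⟩
  have e : ∀ a : ℝ, dist a (a + 2 * (δ / 4)) = δ / 2 := by
    intro a
    rw [Real.dist_eq, show a - (a + 2 * (δ / 4)) = -(δ / 2) by ring, abs_neg,
      abs_of_pos (by positivity)]
  simp only [Prod.dist_eq, e, max_self]
  linarith

end
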